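/- Let i ≥ 2, L ≥ 1 and nonnegative integers a_1,…,a_i be given, and set K = (i−1)L + Σ_{j=1}^{i} a_j + 1. For every user k ∈ [K], every n ∈ [i−1], and every integer m with a_n + L + 1 ≤ m ≤ K − 1, the following equivalence holds in the (a_i,…,a_1)_L-bar-ICP: (<k+m>_K, n+1) ∈ K_k if and only if (<k+m−a_n−L>_K, n) ∈ K_k. (Equivalently: if node (<k+m>_K, n+1) is a side-information node of user k then so is node (<k+m−a_n−L>_K, n), and if node (<k+m>_K, n+1) is an interference node of user k then so is node (<k+m−a_n−L>_K, n).) -/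

import Mathlib

open Finset

/-- `<m>_n`: the unique element of `{1,…,n}` congruent to `m` modulo `n`. -/
def angMod (m : ℤ) (n : ℕ) : ℕ :=
  if m % (n : ℤ) = 0 then n else (m % (n : ℤ)).toNat

/-- The side-information index set `K_k` of user `k` in the
`(a_i,…,a_1)_L`-bar-ICP, as a set of nodes `(b,t)`. -/
def knownIdx (K i L : ℕ) (a : ℕ → ℕ) (k : ℕ) : Set (ℕ × ℕ) :=
  {p | ∃ t ∈ Finset.Icc 1 i, ∃ v ∈ Finset.Icc 1 (i - 1), ∃ r ∈ Finset.Icc 1 L,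
    p.2 = t ∧
    p.1 = angMod ((k : ℤ) + (∑ j ∈ Finset.Icc 1 v, (a (angMod ((i : ℤ) + (t : ℤ) - (j : ℤ)) i) : ℤ))
        + ((v : ℤ) - 1) * (L : ℤ) + (r : ℤ)) K}

lemma angMod_emod (m : ℤ) (n : ℕ) (hn : 0 < n) : (angMod m n : ℤ) % n = m % n := by
  unfold angMod
  have h0 := Int.emod_nonneg m (by omega : (n : ℤ) ≠ 0)
  split_ifs with h
  · simp [h]
  · rw [Int.toNat_of_nonneg h0, Int.emod_emod_of_dvd _ dvd_rfl]

lemma angMod_mem (m : ℤ) (n : ℕ) (hn : 0 < n) : 1 ≤ angMod m n ∧ angMod m n ≤ n := by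
  unfold angMod
  have h0 := Int.emod_nonneg m (by omega : (n : ℤ) ≠ 0)
  have h1 := Int.emod_lt_of_pos m (by omega : (0 : ℤ) < n)
  split_ifs with h <;> omega

lemma eq_of_emod_eq' {x y : ℤ} {n : ℕ} (h : x % n = y % n) (h1 : x - y < n) (h2 : y - x < n) :
    x = y := by
  have hd : (n : ℤ) ∣ x - y := (Int.emod_eq_emod_iff_emod_sub_eq_zero.mp h) |> Int.dvd_of_emod_eq_zero
  have := Int.eq_zero_of_abs_lt_dvd hd (by rw [abs_lt]; constructor <;> omega)
  omega

lemma angMod_shift_inj {k x y : ℤ} {n : ℕ} (hn : 0 < n) (hx : 1 ≤ x) (hx' : x < n) (hy : 1 ≤ y)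
    (hy' : y < n) (h : angMod (k + x) n = angMod (k + y) n) : x = y := by
  have h1 := angMod_emod (k + x) n hn
  rw [h, angMod_emod _ _ hn] at h1
  have := eq_of_emod_eq' h1 (by omega) (by omega)
  omega

lemma angMod_unique {m : ℤ} {n b : ℕ} (hb : 1 ≤ b) (hb' : b ≤ n) (h : (b : ℤ) % n = m % n) :
    angMod m n = b := by
  have hn : 0 < n := by omega
  have h1 := angMod_emod m n hn
  have h2 := angMod_mem m n hn
  have := eq_of_emod_eq' (h1.trans h.symm) (by omega) (by omega)
  omega

/-- partial sums -/
def SS (i : ℕ) (a : ℕ → ℕ) (t v : ℕ) : ℤ :=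
  ∑ j ∈ Finset.Icc 1 v, (a (angMod ((i : ℤ) + (t : ℤ) - (j : ℤ)) i) : ℤ)

lemma SS_total (i : ℕ) (hi : 0 < i) (a : ℕ → ℕ) (t : ℕ) :
    SS i a t i = ∑ j ∈ Finset.Icc 1 i, (a j : ℤ) := by
  have inv : ∀ j ∈ Finset.Icc 1 i,
      angMod ((i : ℤ) + t - (angMod ((i : ℤ) + t - (j : ℤ)) i : ℕ)) i = j := by
    intro j hj
    rw [Finset.mem_Icc] at hj
    apply angMod_unique hj.1 hj.2
    rw [Int.sub_emod, angMod_emod _ _ hi, ← Int.sub_emod]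
    congr 1; ring
  have mem : ∀ j ∈ Finset.Icc 1 i, angMod ((i : ℤ) + t - (j : ℤ)) i ∈ Finset.Icc 1 i := by
    intro j _
    rw [Finset.mem_Icc]
    exact angMod_mem _ _ hi
  unfold SS
  exact Finset.sum_nbij' (fun j : ℕ => angMod ((i : ℤ) + t - (j : ℤ)) i)
    (fun j : ℕ => angMod ((i : ℤ) + t - (j : ℤ)) i) mem mem inv inv (fun _ _ => rfl)

lemma SS_succ (i : ℕ) (a : ℕ → ℕ) (n v : ℕ) (hn : 1 ≤ n) (hn' : n ≤ i) :
    SS i a (n + 1) (v + 1) = a n + SS i a n v := by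
  induction v with
  | zero =>
    have : angMod ((i : ℤ) + n) i = n := angMod_unique hn hn' (by simp)
    simp [SS, this, ← add_assoc]
  | succ v ih =>
    have e : ∀ t w, SS i a t (w + 1) = SS i a t w
        + (a (angMod ((i : ℤ) + (t : ℤ) - ((w + 1 : ℕ) : ℤ)) i) : ℤ) := by
      intro t w
      unfold SS
      rw [Finset.sum_Icc_succ_top (by omega)]
    rw [e, ih, e n v, add_assoc]
    congr 5
    push_cast
    ring

lemma SS_mono (i : ℕ) (a : ℕ → ℕ) (t v w : ℕ) (h : v ≤ w) : SS i a t v ≤ SS i a t w := by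
  unfold SS
  apply Finset.sum_le_sum_of_subset_of_nonneg (Finset.Icc_subset_Icc_right h)
  intros; positivity

lemma SS_nonneg (i : ℕ) (a : ℕ → ℕ) (t v : ℕ) : 0 ≤ SS i a t v := by
  unfold SS; positivity

lemma mem_known_iff (i L : ℕ) (hi : 2 ≤ i) (a : ℕ → ℕ)
    (K : ℕ) (hK : K = (i - 1) * L + (∑ j ∈ Finset.Icc 1 i, a j) + 1)
    (k t : ℕ) (ht : t ∈ Finset.Icc 1 i) (x : ℤ) (hx : 1 ≤ x) (hx' : x < K) :
    (angMod ((k : ℤ) + x) K, t) ∈ knownIdx K i L a k ↔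
      ∃ v : ℕ, v + 1 ≤ i - 1 ∧ ∃ r : ℕ, 1 ≤ r ∧ r ≤ L ∧ x = SS i a t (v + 1) + v * L + r := by
  constructor
  · rintro ⟨t', ht', v, hv, r, hr, h1, h2⟩
    simp only at h1 h2
    subst h1
    rw [Finset.mem_Icc] at hv hr
    obtain ⟨v, rfl⟩ : ∃ w, v = w + 1 := ⟨v - 1, by omega⟩
    refine ⟨v, hv.2, r, hr.1, hr.2, ?_⟩
    have hD : (k : ℤ) + (∑ j ∈ Finset.Icc 1 (v + 1),
        (a (angMod ((i : ℤ) + (t : ℤ) - (j : ℤ)) i) : ℤ)) + (((v + 1 : ℕ) : ℤ) - 1) * (L : ℤ)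
        + (r : ℤ) = k + (SS i a t (v + 1) + v * L + r) := by
      unfold SS; push_cast; ring
    rw [hD] at h2
    have p1 := SS_nonneg i a t (v + 1)
    have p2 := SS_mono i a t (v + 1) i (by omega)
    rw [SS_total i (by omega)] at p2
    have p3 : (v + 1) * L ≤ (i - 1) * L := Nat.mul_le_mul_right _ hv.2
    have p4 : (K : ℤ) = ((i - 1) * L : ℕ) + (∑ j ∈ Finset.Icc 1 i, (a j : ℤ)) + 1 := by
      rw [hK]; push_cast; ring
    have p5 : (v * L + L : ℤ) ≤ ((i - 1) * L : ℕ) := by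
      have : ((v + 1) * L : ℤ) ≤ ((i - 1) * L : ℕ) := by exact_mod_cast p3
      linarith
    have p6 : (0 : ℤ) ≤ v * L := by positivity
    refine angMod_shift_inj (by omega) hx hx' ?_ ?_ h2 <;> omega
  · rintro ⟨v, hv, r, hr, hr', h⟩
    refine ⟨t, ht, v + 1, by rw [Finset.mem_Icc]; omega, r, Finset.mem_Icc.2 ⟨hr, hr'⟩, rfl, ?_⟩
    simp only
    congr 1
    rw [h]
    unfold SS
    push_cast
    ring

/-- Lemma 8 of the paper: for every user `k ∈ [K]`, every
`n ∈ [i−1]` and every `m` with `a_n + L + 1 ≤ m ≤ K − 1`, node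
`(<k+m>_K, n+1)` is a side-information node of user `k` if and only if node
`(<k+m−a_n−L>_K, n)` is. -/
theorem stmt7 (i L : ℕ) (hi : 2 ≤ i) (hL : 1 ≤ L) (a : ℕ → ℕ)
    (K : ℕ) (hK : K = (i - 1) * L + (∑ j ∈ Finset.Icc 1 i, a j) + 1)
    (k : ℕ) (hk : k ∈ Finset.Icc 1 K)
    (n : ℕ) (hn : n ∈ Finset.Icc 1 (i - 1))
    (m : ℕ) (hm₁ : a n + L + 1 ≤ m) (hm₂ : m ≤ K - 1) :
    (angMod ((k : ℤ) + (m : ℤ)) K, n + 1) ∈ knownIdx K i L a k ↔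
      (angMod ((k : ℤ) + (m : ℤ) - (a n : ℤ) - (L : ℤ)) K, n) ∈ knownIdx K i L a k := by
  rw [Finset.mem_Icc] at hn
  have hK1 : 1 ≤ K := by omega
  have e : (k : ℤ) + (m : ℤ) - (a n : ℤ) - (L : ℤ) = k + (m - a n - L) := by ring
  rw [e, mem_known_iff i L hi a K hK k (n + 1) (by rw [Finset.mem_Icc]; omega) m
      (by omega) (by omega),
    mem_known_iff i L hi a K hK k n (by rw [Finset.mem_Icc]; omega) (m - a n - L)
      (by omega) (by omega)]
  constructor
  · rintro ⟨v, hv, r, hr, hr', h⟩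
    rw [SS_succ i a n v hn.1 (by omega)] at h
    rcases v with _ | v
    · simp [SS] at h
      omega
    · refine ⟨v, by omega, r, hr, hr', ?_⟩
      push_cast at h
      linarith
  · rintro ⟨v, hv, r, hr, hr', h⟩
    have h' : (m : ℤ) = SS i a (n + 1) (v + 1 + 1) + ((v + 1 : ℕ) : ℤ) * L + r := by
      rw [SS_succ i a n (v + 1) hn.1 (by omega)]
      push_cast
      linarith
    refine ⟨v + 1, ?_, r, hr, hr', h'⟩
    by_contra hc
    have hvi : v + 1 = i - 1 := by omega
    have hvi' : v + 1 + 1 = i := by omega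
    rw [hvi', SS_total i (by omega), hvi] at h'
    have p4 : (K : ℤ) = ((i - 1 : ℕ) : ℤ) * L + (∑ j ∈ Finset.Icc 1 i, (a j : ℤ)) + 1 := by
      rw [hK]; push_cast; ring
    omega
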